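/- arXiv:1304.0858 — 2 statements merged into one kernel-verified Lean document; each statement's English description precedes it below -/
import Mathlib

section
/- For each c, the symmetric q-Painlevé II equation X(pt) X(p^{-1}t) = p^2 c^2 (1 + tX(t)) / ((t + X(t)) X(t)) is satisfied by any solution of the discrete Riccati equation X(pt) = -p (1 + t X(t))/X(t) when c = 1. -/
/-- Any solution of the discrete Riccati equation `X(pt) = -p(1 + tX(t))/X(t)` satisfies the
symmetric q-Painlevé II equation `X(pt) X(p⁻¹t) = p² c² (1 + tX(t))/((t + X(t)) X(t))`
when `c = 1`. -/
theorem symQP2_of_riccati (p c : ℂ) (hp : p ≠ 0) (X : ℂ → ℂ)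
    (hX : ∀ t, X t ≠ 0) (hXt : ∀ t, t + X t ≠ 0)
    (hRic : ∀ t, X (p * t) = -p * (1 + t * X t) / X t)
    (hc : c = 1) :
    ∀ t, X (p * t) * X (p⁻¹ * t) = p ^ 2 * c ^ 2 * (1 + t * X t) / ((t + X t) * X t) := by
  intro t
  subst hc
  have h := hRic (p⁻¹ * t)
  rw [mul_inv_cancel_left₀ hp] at h
  have hY := hX (p⁻¹ * t)
  have h1 := hX t
  have h2 := hXt t
  rw [eq_div_iff hY] at h
  have h3 : X (p⁻¹ * t) * (t + X t) = -p := by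
    have h4 : p * p⁻¹ = 1 := mul_inv_cancel₀ hp
    linear_combination h - t * X (p⁻¹ * t) * h4
  have h5 : X (p⁻¹ * t) = -p / (t + X t) := by
    rw [eq_div_iff h2]; exact h3
  rw [hRic t, h5, div_mul_div_comm, mul_comm (X t) (t + X t)]
  congr 1
  ring
end

section
/- As q → 1⁻ with q = e^{log q}, the q-Pochhammer symbol satisfies log(q;q)_∞ = π²/(6 log q) + (1/2) log(-2π/log q) + O(log q). -/
open scoped Real
open Asymptotics Filter

noncomputable def auxF (q : ℂ) : ℂ := ∏' n : ℕ, (1 - q ^ (n + 1))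

lemma auxF_zero : auxF 0 = 1 := by simp [auxF]

lemma auxF_ofReal {q : ℝ} (h0 : 0 < q) (hq : q < 1) :
    Real.log (∏' n : ℕ, (1 - q ^ (n + 1))) = Real.log ‖auxF q‖ := by
  have hm : Multipliable fun n : ℕ => 1 - q ^ (n + 1) := by
    apply multipliable_one_add_of_summable (f := fun n => -q ^ (n + 1))
    simpa [abs_of_pos h0] using
      (summable_nat_add_iff 1).mpr (summable_geometric_of_lt_one h0.le hq)
  have : auxF q = ((∏' n : ℕ, (1 - q ^ (n + 1)) : ℝ) : ℂ) := by
    have := hm.map_tprod Complex.ofRealHom Complex.continuous_ofReal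
    rw [Complex.ofRealHom_eq_coe] at this
    rw [this, auxF]
    simp
  rw [this, Complex.norm_real, Real.norm_eq_abs, Real.log_abs]

lemma auxF_bigO : (fun q : ℂ => Real.log ‖auxF q‖) =O[nhds 0] (fun q : ℂ => q) := by
  have hd : DifferentiableAt ℂ auxF 0 :=
    ModularForm.differentiableOn_tprod_one_sub_pow.differentiableAt
      (Metric.ball_mem_nhds 0 one_pos)
  have hl : DifferentiableAt ℂ (fun q => Complex.log (auxF q)) 0 :=
    hd.clog (by rw [auxF_zero]; exact Complex.one_mem_slitPlane)
  have h := hl.isBigO_sub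
  simp only [auxF_zero, Complex.log_one, sub_zero] at h
  refine IsBigO.trans (IsBigO.of_bound 1 (Eventually.of_forall fun q => ?_)) h
  rw [one_mul, ← Complex.log_re]
  exact Complex.abs_re_le_norm _

lemma norm_eta_I {t : ℝ} :
    ‖ModularForm.eta (Complex.I * t)‖
      = Real.exp (-π * t / 12) * ‖auxF (Real.exp (-2 * π * t) : ℝ)‖ := by
  have h1 : Function.Periodic.qParam 1 (Complex.I * t) = ((Real.exp (-2 * π * t) : ℝ) : ℂ) := by
    rw [Function.Periodic.qParam, Complex.ofReal_exp]
    congr 1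
    push_cast
    linear_combination (2 * π * t : ℂ) * Complex.I_sq
  have h2 : ‖Function.Periodic.qParam 24 (Complex.I * t)‖ = Real.exp (-π * t / 12) := by
    rw [Function.Periodic.norm_qParam]
    congr 1
    simp
    ring
  rw [ModularForm.eta, norm_mul, h2]
  simp only [ModularForm.eta_q, h1, auxF]

lemma auxF_transform {t : ℝ} (ht : 0 < t) :
    Real.log ‖auxF (Real.exp (-2 * π * t) : ℝ)‖ = -π / (12 * t) + π * t / 12
      - 1 / 2 * Real.log t + Real.log ‖auxF (Real.exp (-2 * π * t⁻¹) : ℝ)‖ := by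
  have hm : ∀ s : ℝ, 0 < s → Complex.I * (s : ℂ) ∈ UpperHalfPlane.upperHalfPlaneSet := by
    intro s hs
    simpa [UpperHalfPlane.upperHalfPlaneSet] using hs
  have hz : ∀ s : ℝ, 0 < s → ‖auxF (Real.exp (-2 * π * s) : ℝ)‖ ≠ 0 := by
    intro s hs h
    have := norm_eta_I (t := s)
    rw [h, mul_zero, norm_eq_zero] at this
    exact ModularForm.eta_ne_zero (hm s hs) this
  have h := congrArg norm (ModularForm.eta_comp_eq_csqrt_I_inv (hm t ht))
  have e : (-1 / (Complex.I * (t : ℂ))) = Complex.I * ((t⁻¹ : ℝ) : ℂ) := by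
    have : (t : ℂ) ≠ 0 := by exact_mod_cast ht.ne'
    push_cast
    field_simp
    simp
  have hs : ∀ s : ℝ, 0 < s → ‖Complex.sqrt (Complex.I * s)‖ = s ^ (1 / 2 : ℝ) := by
    intro s hs
    rw [Complex.sqrt]
    have := Complex.norm_cpow_real (Complex.I * s) (1 / 2)
    push_cast at this
    simp at this
    simp [this, abs_of_pos hs]
  have hs1 : ‖Complex.sqrt Complex.I‖ = 1 := by simpa using hs 1 one_pos
  simp only [Function.comp_apply, Pi.smul_apply, Pi.mul_apply, smul_eq_mul, norm_mul,
    norm_inv, hs1] at h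
  rw [e, norm_eta_I, norm_eta_I, hs t ht] at h
  have h' := congrArg Real.log h
  have h3 := (Real.rpow_pos_of_pos ht (1 / 2 : ℝ)).ne'
  rw [inv_one, one_mul, Real.log_mul (Real.exp_pos _).ne' (hz _ (inv_pos.2 ht)),
    Real.log_mul h3 (mul_ne_zero (Real.exp_pos _).ne' (hz _ ht)),
    Real.log_mul (Real.exp_pos _).ne' (hz _ ht), Real.log_exp, Real.log_exp,
    Real.log_rpow ht] at h'
  have : -π / (12 * t) = -π * t⁻¹ / 12 := by field_simp
  rw [this]
  linarith

/-- As `q → 1⁻`, `log(q;q)_∞ = π²/(6 log q) + (1/2) log(-2π/log q) + O(log q)`. -/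
theorem qPochhammer_asymptotic_q :
    (fun q : ℝ => Real.log (∏' n : ℕ, (1 - q ^ (n + 1)))
        - (π ^ 2 / (6 * Real.log q) + (1 / 2) * Real.log (-(2 * π) / Real.log q)))
      =O[nhdsWithin 1 (Set.Ioo (0:ℝ) 1)] (fun q : ℝ => Real.log q) := by
  have hlog : Tendsto Real.log (nhdsWithin 1 (Set.Ioo (0:ℝ) 1)) (nhdsWithin 0 (Set.Iio 0)) := by
    refine tendsto_nhdsWithin_iff.2 ⟨?_, ?_⟩
    · have := (Real.continuousAt_log one_ne_zero).tendsto
      rw [Real.log_one] at this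
      exact this.mono_left nhdsWithin_le_nhds
    · filter_upwards [self_mem_nhdsWithin] with q hq
      exact Real.log_neg hq.1 hq.2
  have hpi := Real.pi_pos
  -- the exponentially small term
  have hr : Tendsto (fun q : ℝ => ((Real.exp (4 * π ^ 2 * (Real.log q)⁻¹) : ℝ) : ℂ))
      (nhdsWithin 1 (Set.Ioo (0:ℝ) 1)) (nhds 0) := by
    have h1 : Tendsto (fun q : ℝ => Real.exp (4 * π ^ 2 * (Real.log q)⁻¹))
        (nhdsWithin 1 (Set.Ioo (0:ℝ) 1)) (nhds 0) :=
      Real.tendsto_exp_atBot.comp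
        ((tendsto_inv_nhdsLT_zero.comp hlog).const_mul_atBot (by positivity))
    exact (Complex.continuous_ofReal.tendsto' 0 0 (by simp)).comp h1
  have hO := auxF_bigO.comp_tendsto hr
  have hO2 : ((fun q : ℂ => q) ∘ fun q : ℝ => ((Real.exp (4 * π ^ 2 * (Real.log q)⁻¹) : ℝ) : ℂ))
      =O[nhdsWithin 1 (Set.Ioo (0:ℝ) 1)] (fun q : ℝ => Real.log q) := by
    refine IsBigO.of_bound 1 ?_
    filter_upwards [self_mem_nhdsWithin] with q hq
    have hL := Real.log_neg hq.1 hq.2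
    simp only [Function.comp_apply, Complex.norm_real, Real.norm_eq_abs, Real.abs_exp, one_mul]
    rw [abs_of_neg hL]
    set L := Real.log q
    have hp : 0 < (-L)⁻¹ := inv_pos.2 (by linarith)
    have hpi3 := Real.pi_gt_three
    have h1 : (-L)⁻¹ ≤ Real.exp (-(4 * π ^ 2 * L⁻¹)) := by
      have h2 := Real.add_one_le_exp (-(4 * π ^ 2 * L⁻¹))
      have h3 : -(4 * π ^ 2 * L⁻¹) = 4 * π ^ 2 * (-L)⁻¹ := by rw [inv_neg]; ring
      have h4 : 1 ≤ 4 * π ^ 2 := by nlinarith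
      rw [h3] at h2 ⊢
      nlinarith
    rw [Real.exp_neg] at h1
    exact (inv_le_inv₀ (by linarith) (Real.exp_pos _)).1 h1
  refine ((hO.trans hO2).add ((isBigO_refl (fun q : ℝ => Real.log q) _).const_mul_left
    (-1 / 24))).congr' ?_ EventuallyEq.rfl
  filter_upwards [self_mem_nhdsWithin] with q hq
  have hL := Real.log_neg hq.1 hq.2
  have ht : 0 < -Real.log q / (2 * π) := div_pos (by linarith) (by positivity)
  have key := auxF_transform ht
  have e1 : Real.exp (-2 * π * (-Real.log q / (2 * π))) = q := by
    rw [show -2 * π * (-Real.log q / (2 * π)) = Real.log q by field_simp]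
    exact Real.exp_log hq.1
  have e2 : -2 * π * (-Real.log q / (2 * π))⁻¹ = 4 * π ^ 2 * (Real.log q)⁻¹ := by
    have := hL.ne
    field_simp
    norm_num
  have e3 : -(2 * π) / Real.log q = (-Real.log q / (2 * π))⁻¹ := by
    rw [inv_div, neg_div, div_neg]
  rw [e1, e2] at key
  rw [auxF_ofReal hq.1 hq.2, key, e3, Real.log_inv]
  simp only [Function.comp_apply]
  have e4 : -π / (12 * (-Real.log q / (2 * π))) = π ^ 2 / (6 * Real.log q) := by
    have := hL.ne
    field_simp
    norm_num
  have e5 : π * (-Real.log q / (2 * π)) / 12 = -1 / 24 * Real.log q := by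
    field_simp
    ring
  rw [e4, e5]
  ring
end
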